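/- Every C² function u : ℝ² → ℝ defined on the entire plane that satisfies the minimal surface equation (1 + u_y²)·u_xx − 2·u_x·u_y·u_xy + (1 + u_x²)·u_yy = 0 at every point of ℝ² is affine linear, i.e. there exist a, b, c ∈ ℝ with u(x,y) = a·x + b·y + c for all (x,y) ∈ ℝ². -/

import Mathlib

/-- First partial derivative in the `x`-direction. -/
noncomputable def ux (u : ℝ × ℝ → ℝ) (p : ℝ × ℝ) : ℝ := fderiv ℝ u p (1, 0)

/-- First partial derivative in the `y`-direction. -/
noncomputable def uy (u : ℝ × ℝ → ℝ) (p : ℝ × ℝ) : ℝ := fderiv ℝ u p (0, 1)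

/-- Second partial derivative `u_xx`. -/
noncomputable def uxx (u : ℝ × ℝ → ℝ) (p : ℝ × ℝ) : ℝ := fderiv ℝ (ux u) p (1, 0)

/-- Second partial derivative `u_xy`. -/
noncomputable def uxy (u : ℝ × ℝ → ℝ) (p : ℝ × ℝ) : ℝ := fderiv ℝ (ux u) p (0, 1)

/-- Second partial derivative `u_yy`. -/
noncomputable def uyy (u : ℝ × ℝ → ℝ) (p : ℝ × ℝ) : ℝ := fderiv ℝ (uy u) p (0, 1)

/-!
Write `c = u_x + i u_y` for the slope of the graph, `W = √(1 + |c|²)`, and let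
`A = (1 + c ⊗ c) / W` be its first fundamental form, scaled to determinant one. Given that `c` is a
gradient, the minimal surface equation says exactly that the `ℂ`-valued one-form `A` is closed, so
`A = dg` for some `g : ℂ → ℂ`. Since `A` is positive, Lewy's map `T z = z + g z` is strongly
monotone and hence a homeomorphism of the plane. In the coordinate `T z`, which is isothermal on
the graph, the function `conj (g z - z)` is entire, and its derivative is the square of
`conj (c / (1 + W))`, the stereographic image of the Gauss map. As this has modulus less than one,
Liouville's theorem makes the Gauss map constant; then `c` is constant and `u` is affine.
-/

open Function Set Filter Topology Complex ComplexConjugate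
open scoped NNReal RealInnerProductSpace

/-! ### Global inversion of strongly monotone maps -/

theorem isClosed_range_of_antilipschitzWith {X Y : Type*} [PseudoEMetricSpace X]
    [CompleteSpace X] [EMetricSpace Y] {f : X → Y} {K : ℝ≥0} (hf : AntilipschitzWith K f)
    (hfc : Continuous f) : IsClosed (range f) := by
  refine isClosed_of_closure_subset fun y hy => ?_
  have hne : (comap f (𝓝 y)).NeBot := comap_neBot_iff_frequently.2 (mem_closure_iff_frequently.1 hy)
  have hcauchy : Cauchy (comap f (𝓝 y)) :=
    ⟨hne, by
      grw [← hf.comap_uniformity_le, prod_comap_comap_eq]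
      exact comap_mono cauchy_nhds.2⟩
  obtain ⟨x, hx⟩ := CompleteSpace.complete hcauchy
  exact ⟨x, tendsto_nhds_unique (hfc.continuousAt.tendsto.mono_left hx) tendsto_comap⟩

theorem isHomeomorph_of_antilipschitzWith_of_isOpenMap {X Y : Type*} [EMetricSpace X]
    [CompleteSpace X] [Nonempty X] [EMetricSpace Y] [PreconnectedSpace Y] {f : X → Y} {K : ℝ≥0}
    (hf : AntilipschitzWith K f) (hfc : Continuous f) (hfo : IsOpenMap f) : IsHomeomorph f where
  continuous := hfc
  isOpenMap := hfo
  bijective := by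
    have hclopen : IsClopen (range f) :=
      ⟨isClosed_range_of_antilipschitzWith hf hfc, hfo.isOpen_range⟩
    exact ⟨hf.injective, range_eq_univ.1 (hclopen.eq_univ (range_nonempty f))⟩

section StronglyMonotone

variable {E : Type*} [NormedAddCommGroup E] [InnerProductSpace ℝ E]

theorem antilipschitzWith_of_le_inner_sub {f : E → E} {c : ℝ≥0} (hc : 0 < c)
    (h : ∀ x y, ‖x - y‖ ^ 2 * c ≤ ⟪f x - f y, x - y⟫) : AntilipschitzWith c⁻¹ f := by
  refine AntilipschitzWith.of_le_mul_dist fun x y => ?_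
  rw [dist_eq_norm, dist_eq_norm, NNReal.coe_inv, inv_mul_eq_div,
    le_div_iff₀ (NNReal.coe_pos.2 hc)]
  rcases (norm_nonneg (x - y)).eq_or_lt with hxy | hxy
  · simp [← hxy]
  · refine le_of_mul_le_mul_right ?_ hxy
    calc ‖x - y‖ * c * ‖x - y‖ = ‖x - y‖ ^ 2 * c := by ring
      _ ≤ ⟪f x - f y, x - y⟫ := h x y
      _ ≤ ‖f x - f y‖ * ‖x - y‖ := real_inner_le_norm _ _

theorem le_inner_sub_of_le_inner_fderiv {f : E → E} {f' : E → E →L[ℝ] E} {c : ℝ}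
    (hf : ∀ x, HasFDerivAt f (f' x) x) (h : ∀ x v, ‖v‖ ^ 2 * c ≤ ⟪f' x v, v⟫) (x y : E) :
    ‖x - y‖ ^ 2 * c ≤ ⟪f x - f y, x - y⟫ := by
  have hline (t : ℝ) : HasDerivAt (fun t : ℝ => y + t • (x - y)) (x - y) t := by
    simpa using ((hasDerivAt_id t).smul_const (x - y)).const_add y
  have hφ (t : ℝ) : HasDerivAt (fun t : ℝ => ⟪f (y + t • (x - y)), x - y⟫)
      ⟪f' (y + t • (x - y)) (x - y), x - y⟫ t := by
    simpa using ((hf _).comp_hasDerivAt t (hline t)).inner ℝ (hasDerivAt_const t (x - y))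
  obtain ⟨θ, -, hθ⟩ := exists_hasDerivAt_eq_slope _ _ zero_lt_one
    (fun t _ => (hφ t).continuousAt.continuousWithinAt) fun t _ => hφ t
  calc ‖x - y‖ ^ 2 * c ≤ ⟪f' (y + θ • (x - y)) (x - y), x - y⟫ := h _ _
    _ = ⟪f x - f y, x - y⟫ := by rw [hθ]; simp [inner_sub_left]

variable [CompleteSpace E]

theorem isUnit_of_le_inner {A : E →L[ℝ] E} {c : ℝ≥0} (hc : 0 < c)
    (h : ∀ v, ‖v‖ ^ 2 * c ≤ ⟪A v, v⟫) : IsUnit A :=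
  ContinuousLinearMap.isUnit_of_forall_le_norm_inner_map A hc fun v =>
    (h v).trans (Real.le_norm_self _)

theorem isHomeomorph_of_le_inner_fderiv {f : E → E} {f' : E → E →L[ℝ] E} {c : ℝ≥0} (hc : 0 < c)
    (hf : ∀ x, HasStrictFDerivAt f (f' x) x) (h : ∀ x v, ‖v‖ ^ 2 * c ≤ ⟪f' x v, v⟫) :
    IsHomeomorph f := by
  have hanti : AntilipschitzWith c⁻¹ f := antilipschitzWith_of_le_inner_sub hc
    (le_inner_sub_of_le_inner_fderiv (fun x => (hf x).hasFDerivAt) h)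
  refine isHomeomorph_of_antilipschitzWith_of_isOpenMap hanti
    (continuous_iff_continuousAt.2 fun x => (hf x).continuousAt) ?_
  exact isOpenMap_of_hasStrictFDerivAt_equiv
    (f' := fun x => .ofUnit (isUnit_of_le_inner hc (h x)).unit) hf

end StronglyMonotone

/-! ### Constancy, primitives and changes of variable -/

theorem eq_const_of_sq_eq_const {X : Type*} [TopologicalSpace X] [PreconnectedSpace X]
    {K : Type*} [Field K] [TopologicalSpace K] [T1Space K] [ContinuousInv₀ K] [ContinuousMul K]
    {f : X → K} (hf : Continuous f) (h : ∀ x y, f x ^ 2 = f y ^ 2) (x y : X) : f x = f y := by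
  by_cases hy : f y = 0
  · rw [hy, ← sq_eq_zero_iff, h x y, hy, zero_pow two_ne_zero]
  · exact isPreconnected_univ.eq_of_sq_eq hf.continuousOn continuousOn_const
      (fun z _ => h z y) (fun _ => hy) (mem_univ y) rfl (mem_univ x)

theorem eq_apply_add_of_fderiv_eq_const {𝕜 E F : Type*} [RCLike 𝕜] [NormedAddCommGroup E]
    [NormedSpace 𝕜 E] [NormedAddCommGroup F] [NormedSpace 𝕜 F] {f : E → F} {L : E →L[𝕜] F}
    (hf : Differentiable 𝕜 f) (hL : ∀ x, fderiv 𝕜 f x = L) (x : E) : f x = L x + f 0 := by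
  have hfL : f = fun x => L x + f 0 :=
    eq_of_fderiv_eq hf (L.differentiable.add_const _) (fun x => by simp [hL]) 0 (by simp)
  exact congr_fun hfL x

theorem hasDerivAt_comp_homeomorph_symm {e : ℂ ≃ₜ ℂ} {e' : ℂ →L[ℝ] ℂ} {f : ℂ → ℂ} {m z : ℂ}
    (he' : IsUnit e') (he : HasFDerivAt e e' z) (hf : HasFDerivAt f (m • e') z) :
    HasDerivAt (f ∘ e.symm) m (e z) := by
  obtain ⟨A, rfl⟩ : ∃ A : ℂ ≃L[ℝ] ℂ, (A : ℂ →L[ℝ] ℂ) = e' := ⟨.ofUnit he'.unit, rfl⟩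
  have hsymm : HasFDerivAt e.symm (A.symm : ℂ →L[ℝ] ℂ) (e z) :=
    e.toOpenPartialHomeomorph.hasFDerivAt_symm (mem_univ _) (by simpa using he)
  have hcomp : HasFDerivAt (f ∘ e.symm) ((m • (A : ℂ →L[ℝ] ℂ)).comp (A.symm : ℂ →L[ℝ] ℂ)) (e z) :=
    HasFDerivAt.comp (e z) (by simpa using hf) hsymm
  refine hasFDerivAt_of_restrictScalars ℝ hcomp ?_
  ext1 v
  simp [mul_comm]

theorem deriv_eq_deriv_of_norm_deriv_le {F : Type*} [NormedAddCommGroup F] [NormedSpace ℂ F]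
    [CompleteSpace F] {f : ℂ → F} {C : ℝ} (hf : Differentiable ℂ f) (hC : ∀ z, ‖deriv f z‖ ≤ C)
    (z w : ℂ) : deriv f z = deriv f w :=
  hf.deriv.apply_eq_apply_of_bounded
    (isBounded_iff_forall_norm_le.2 ⟨C, forall_mem_range.2 hC⟩) z w

theorem bilin_symm_of_apply_one_I {F : Type*} [NormedAddCommGroup F] [NormedSpace ℝ F]
    {B : ℂ →L[ℝ] ℂ →L[ℝ] F} (h : B 1 I = B I 1) (v w : ℂ) : B v w = B w v := by
  have hdecomp (z : ℂ) : z = z.re • (1 : ℂ) + z.im • I := by simp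
  rw [hdecomp v, hdecomp w]
  simp only [map_add, map_smul, add_apply, smul_apply, h]
  module

theorem exists_hasFDerivAt_of_fderiv_apply_one_I {F : Type*} [NormedAddCommGroup F]
    [NormedSpace ℝ F] [CompleteSpace F] {ω : ℂ → ℂ →L[ℝ] F} (hω : Differentiable ℝ ω)
    (h : ∀ z, fderiv ℝ ω z 1 I = fderiv ℝ ω z I 1) : ∃ f : ℂ → F, ∀ z, HasFDerivAt f (ω z) z := by
  obtain ⟨f, hf⟩ := convex_univ.exists_forall_hasFDerivAt_of_fderiv_symmetric isOpen_univ
    hω.differentiableOn fun z _ => bilin_symm_of_apply_one_I (h z)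
  exact ⟨f, fun z => hf z trivial⟩

/-! ### Graphs with slope `c` -/

section Slope

variable {E : Type*} [NormedAddCommGroup E]

/-- The area element `W = √(1 + |c|²)` of a graph with slope `c`. -/
noncomputable def areaElement (c : E) : ℝ := √(1 + ‖c‖ ^ 2)

theorem areaElement_sq (c : E) : areaElement c ^ 2 = 1 + ‖c‖ ^ 2 :=
  Real.sq_sqrt (by positivity)

theorem areaElement_pos (c : E) : 0 < areaElement c :=
  Real.sqrt_pos.2 (by positivity)

section NormedSpace

variable [NormedSpace ℝ E]

/-- Up to sign, the stereographic projection from the south pole of the unit normal `(-c, 1) / W`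
to a graph with slope `c`. -/
noncomputable def stereographicNormal (c : E) : E := (1 + areaElement c)⁻¹ • c

theorem norm_stereographicNormal_sq (c : E) :
    ‖stereographicNormal c‖ ^ 2 = (areaElement c - 1) / (areaElement c + 1) := by
  have hW := areaElement_pos c
  rw [stereographicNormal, norm_smul, Real.norm_of_nonneg (by positivity)]
  field_simp
  linear_combination -(areaElement c + 1) * areaElement_sq c

theorem norm_stereographicNormal_lt_one (c : E) : ‖stereographicNormal c‖ < 1 := by
  have hW := areaElement_pos c
  rw [← sq_lt_one_iff₀ (norm_nonneg _), norm_stereographicNormal_sq, div_lt_one (by positivity)]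
  linarith

theorem stereographicNormal_injective : Injective (stereographicNormal : E → E) := by
  have hinv (c : E) :
      (2 / (1 - ‖stereographicNormal c‖ ^ 2)) • stereographicNormal c = c := by
    have hW := areaElement_pos c
    have h2 : 1 - ‖stereographicNormal c‖ ^ 2 = 2 / (1 + areaElement c) := by
      rw [norm_stereographicNormal_sq]
      field_simp
      ring
    rw [h2, stereographicNormal, smul_smul]
    field_simp
    exact one_smul ℝ c
  exact LeftInverse.injective (g := fun n => (2 / (1 - ‖n‖ ^ 2)) • n) hinv

theorem continuous_stereographicNormal : Continuous (stereographicNormal : E → E) := by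
  have hW : Continuous (areaElement : E → ℝ) := by unfold areaElement; fun_prop
  exact ((continuous_const.add hW).inv₀ fun c => by
    have := areaElement_pos c
    exact (by positivity : 1 + areaElement c ≠ 0)).smul continuous_id

end NormedSpace

variable [InnerProductSpace ℝ E]

theorem hasFDerivAt_areaElement (c : E) :
    HasFDerivAt areaElement ((areaElement c)⁻¹ • innerSL ℝ c) c := by
  refine (((hasFDerivAt_id c).norm_sq.const_add 1).sqrt (by positivity)).congr_fderiv ?_
  ext v
  simp only [id_eq, one_div, mul_inv_rev, ContinuousLinearMap.comp_id, smul_apply,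
    coe_innerSL_apply, nsmul_eq_mul, Nat.cast_ofNat, smul_eq_mul, areaElement]
  field_simp

/-- The first fundamental form `1 + c ⊗ c` of a graph with slope `c`, divided by the area
element. For a surface (`dim E = 2`) its determinant is one. -/
noncomputable def normalizedFirstForm (c : E) : E →L[ℝ] E :=
  (areaElement c)⁻¹ • (.id ℝ E + InnerProductSpace.rankOne ℝ c c)

theorem normalizedFirstForm_apply (c v : E) :
    normalizedFirstForm c v = (areaElement c)⁻¹ • (v + ⟪c, v⟫ • c) := by
  simp [normalizedFirstForm]

theorem inner_normalizedFirstForm_nonneg (c v : E) : 0 ≤ ⟪normalizedFirstForm c v, v⟫ := by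
  have hW := areaElement_pos c
  have hquad : ⟪normalizedFirstForm c v, v⟫ = (areaElement c)⁻¹ * (‖v‖ ^ 2 + ⟪c, v⟫ ^ 2) := by
    rw [normalizedFirstForm_apply, real_inner_smul_left, inner_add_left, real_inner_smul_left,
      real_inner_self_eq_norm_sq, sq ⟪c, v⟫]
  rw [hquad]
  positivity

theorem differentiable_normalizedFirstForm :
    Differentiable ℝ (normalizedFirstForm : E → E →L[ℝ] E) := by
  have hW : Differentiable ℝ fun c : E => (areaElement c)⁻¹ := fun c =>
    (hasFDerivAt_areaElement c).differentiableAt.inv (areaElement_pos c).ne'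
  have hrankOne :
      Differentiable ℝ fun c : E => ContinuousLinearMap.smulRightL ℝ E E (innerSL ℝ c) c :=
    ((ContinuousLinearMap.smulRightL ℝ E E).differentiable.comp
      (innerSL ℝ).differentiable).clm_apply differentiable_id
  exact hW.smul (hrankOne.const_add _)

theorem fderiv_normalizedFirstForm_apply (c h v : E) :
    fderiv ℝ normalizedFirstForm c h v =
      (areaElement c)⁻¹ • (⟪h, v⟫ • c + ⟪c, v⟫ • h)
        - (⟪c, h⟫ / areaElement c ^ 3) • (v + ⟪c, v⟫ • c) := by
  have hW := areaElement_pos c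
  have hinv : HasFDerivAt (fun c : E => (areaElement c)⁻¹)
      (-(areaElement c ^ 3)⁻¹ • innerSL ℝ c) c := by
    refine ((hasDerivAt_inv hW.ne').comp_hasFDerivAt c
      (hasFDerivAt_areaElement c)).congr_fderiv ?_
    rw [smul_smul]
    congr 1
    field_simp
  have hinner : HasFDerivAt (fun c : E => ⟪c, v⟫) (innerSL ℝ v) c := by
    simp only [real_inner_comm v]
    exact (innerSL ℝ v).hasFDerivAt
  calc fderiv ℝ normalizedFirstForm c h v
      = fderiv ℝ (fun c : E => normalizedFirstForm c v) c h := by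
        rw [fderiv_clm_apply (differentiable_normalizedFirstForm c) (differentiableAt_const v)]
        simp
    _ = fderiv ℝ (fun c : E => (areaElement c)⁻¹ • (v + ⟪c, v⟫ • c)) c h := by
        simp only [normalizedFirstForm_apply]
    _ = (areaElement c)⁻¹ • (⟪h, v⟫ • c + ⟪c, v⟫ • h)
        - (⟪c, h⟫ / areaElement c ^ 3) • (v + ⟪c, v⟫ • c) := by
        have hderiv : HasFDerivAt (fun c : E => (areaElement c)⁻¹ • (v + ⟪c, v⟫ • c)) _ c :=
          hinv.fun_smul ((hinner.fun_smul (hasFDerivAt_id c)).const_add v)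
        rw [hderiv.fderiv]
        simp only [real_inner_comm v, id_eq, smul_add, neg_smul, add_apply, smul_apply,
          ContinuousLinearMap.id_apply, ContinuousLinearMap.smulRight_apply, coe_innerSL_apply,
          neg_apply, smul_eq_mul]
        module

theorem norm_sq_le_inner_id_add_normalizedFirstForm (c v : E) :
    ‖v‖ ^ 2 ≤ ⟪(.id ℝ E + normalizedFirstForm c : E →L[ℝ] E) v, v⟫ := by
  simpa [inner_add_left] using inner_normalizedFirstForm_nonneg c v

theorem isHomeomorph_add_of_hasFDerivAt [CompleteSpace E] {c g : E → E} (hc : Continuous c)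
    (hg : ∀ z, HasFDerivAt g (normalizedFirstForm (c z)) z) :
    IsHomeomorph fun z => z + g z := by
  have hderiv (z : E) :
      HasFDerivAt (fun z => z + g z) (.id ℝ E + normalizedFirstForm (c z)) z :=
    (hasFDerivAt_id z).add (hg z)
  have hcont : Continuous fun z => .id ℝ E + normalizedFirstForm (c z) :=
    continuous_const.add (differentiable_normalizedFirstForm.continuous.comp hc)
  exact isHomeomorph_of_le_inner_fderiv one_pos (fun z =>
    hasStrictFDerivAt_of_hasFDerivAt_of_continuousAt (.of_forall hderiv) hcont.continuousAt)
    fun z v => by simpa using norm_sq_le_inner_id_add_normalizedFirstForm (c z) v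

end Slope

theorem conj_normalizedFirstForm_sub (c v : ℂ) :
    conj (normalizedFirstForm c v - v) =
      conj (stereographicNormal c) ^ 2 * (v + normalizedFirstForm c v) := by
  have hW : 1 + (areaElement c : ℂ) ≠ 0 := by
    exact_mod_cast (add_pos one_pos (areaElement_pos c)).ne'
  have hW' : (areaElement c : ℂ) ≠ 0 := by exact_mod_cast (areaElement_pos c).ne'
  have hsq : c * conj c = (areaElement c : ℂ) ^ 2 - 1 := by
    rw [mul_conj, normSq_eq_norm_sq, ← ofReal_pow, areaElement_sq]
    push_cast
    ring
  have hinner : 2 * (⟪c, v⟫ : ℂ) = conj c * v + c * conj v := by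
    rw [Complex.inner, ← ofReal_ofNat, ← ofReal_mul, ← add_conj, map_mul, conj_conj]
    ring
  simp only [normalizedFirstForm_apply, stereographicNormal, real_smul, map_sub, map_add, map_mul,
    map_inv₀, map_one, conj_ofReal, ofReal_inv, ofReal_add, ofReal_one]
  field_simp
  linear_combination (-conj c * ⟪c, v⟫ + (1 + areaElement c) * conj v) * hsq
    + conj c * (1 + areaElement c) * hinner

theorem fderiv_normalizedFirstForm_apply_I_sub_apply_one {c p q : ℂ} (h : q.re = p.im) :
    fderiv ℝ normalizedFirstForm c p I - fderiv ℝ normalizedFirstForm c q 1 =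
      (((1 + c.im ^ 2) * p.re - 2 * c.re * c.im * p.im + (1 + c.re ^ 2) * q.im) /
        areaElement c ^ 3) • (-I * c) := by
  have hW := areaElement_pos c
  have hsq : areaElement c ^ 2 = 1 + (c.re ^ 2 + c.im ^ 2) := by
    rw [areaElement_sq, ← normSq_eq_norm_sq, normSq_apply, sq, sq]
  rw [fderiv_normalizedFirstForm_apply, fderiv_normalizedFirstForm_apply]
  apply Complex.ext
  all_goals
    simp only [Complex.inner, sub_re, sub_im, add_re, add_im, neg_re, neg_im, Complex.smul_re,
      Complex.smul_im, smul_eq_mul, mul_re, mul_im, conj_re, conj_im, I_re, I_im, one_re, one_im, h]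
    field_simp
    rw [hsq]
    ring

/-! ### Minimal surfaces over the plane -/

/-- The slope `c = u_x + i u_y` of an entire minimal graph: a curl-free planar field that solves
the minimal surface equation. The derivatives `c 1` and `c I` along the axes are
`u_xx + i u_xy` and `u_xy + i u_yy`. -/
structure IsMinimalSlope (c : ℂ → ℂ) : Prop where
  differentiable : Differentiable ℝ c
  curl_eq_zero (z : ℂ) : (fderiv ℝ c z I).re = (fderiv ℝ c z 1).im
  minimal (z : ℂ) : (1 + (c z).im ^ 2) * (fderiv ℝ c z 1).re
    - 2 * (c z).re * (c z).im * (fderiv ℝ c z 1).im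
    + (1 + (c z).re ^ 2) * (fderiv ℝ c z I).im = 0

namespace IsMinimalSlope

variable {c : ℂ → ℂ}

theorem fderiv_normalizedFirstForm_symm (hc : IsMinimalSlope c) (z : ℂ) :
    fderiv ℝ (fun z => normalizedFirstForm (c z)) z 1 I =
      fderiv ℝ (fun z => normalizedFirstForm (c z)) z I 1 := by
  have hchain (v : ℂ) : fderiv ℝ (fun z => normalizedFirstForm (c z)) z v =
      fderiv ℝ normalizedFirstForm (c z) (fderiv ℝ c z v) := by
    rw [fderiv_fun_comp z (differentiable_normalizedFirstForm _) (hc.differentiable z)]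
    rfl
  rw [← sub_eq_zero, hchain, hchain,
    fderiv_normalizedFirstForm_apply_I_sub_apply_one (hc.curl_eq_zero z), hc.minimal, zero_div,
    zero_smul]

theorem exists_primitive (hc : IsMinimalSlope c) :
    ∃ g : ℂ → ℂ, ∀ z, HasFDerivAt g (normalizedFirstForm (c z)) z :=
  exists_hasFDerivAt_of_fderiv_apply_one_I
    (differentiable_normalizedFirstForm.fun_comp hc.differentiable)
    hc.fderiv_normalizedFirstForm_symm

theorem conj_stereographicNormal_sq_eq (hc : IsMinimalSlope c) (z w : ℂ) :
    conj (stereographicNormal (c z)) ^ 2 = conj (stereographicNormal (c w)) ^ 2 := by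
  obtain ⟨g, hg⟩ := hc.exists_primitive
  let T : ℂ ≃ₜ ℂ :=
    (isHomeomorph_add_of_hasFDerivAt hc.differentiable.continuous hg).homeomorph
  let N : ℂ → ℂ := fun z => conj (g z - z)
  have hT (z : ℂ) : HasFDerivAt T (.id ℝ ℂ + normalizedFirstForm (c z)) z :=
    (hasFDerivAt_id z).add (hg z)
  have hT_unit (z : ℂ) : IsUnit (.id ℝ ℂ + normalizedFirstForm (c z) : ℂ →L[ℝ] ℂ) :=
    isUnit_of_le_inner one_pos fun v => by
      simpa using norm_sq_le_inner_id_add_normalizedFirstForm (c z) v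
  have hN (z : ℂ) : HasFDerivAt N
      (conj (stereographicNormal (c z)) ^ 2 • (.id ℝ ℂ + normalizedFirstForm (c z))) z := by
    refine (conjCLE.hasFDerivAt.comp z ((hg z).sub (hasFDerivAt_id z))).congr_fderiv ?_
    exact ContinuousLinearMap.ext (conj_normalizedFirstForm_sub (c z))
  have hderiv (z : ℂ) : HasDerivAt (N ∘ T.symm) (conj (stereographicNormal (c z)) ^ 2) (T z) :=
    hasDerivAt_comp_homeomorph_symm (hT_unit z) (hT z) (hN z)
  have hentire : Differentiable ℂ (N ∘ T.symm) :=
    T.surjective.forall.2 fun z => (hderiv z).differentiableAt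
  have hbound : ∀ ζ, ‖deriv (N ∘ T.symm) ζ‖ ≤ 1 := T.surjective.forall.2 fun z => by
    rw [(hderiv z).deriv, norm_pow, RCLike.norm_conj]
    exact pow_le_one₀ (norm_nonneg _) (norm_stereographicNormal_lt_one _).le
  rw [← (hderiv z).deriv, ← (hderiv w).deriv]
  exact deriv_eq_deriv_of_norm_deriv_le hentire hbound _ _

theorem eq_const (hc : IsMinimalSlope c) (z w : ℂ) : c z = c w := by
  have hcont : Continuous fun z => conj (stereographicNormal (c z)) :=
    continuous_conj.comp (continuous_stereographicNormal.comp hc.differentiable.continuous)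
  have hconj := eq_const_of_sq_eq_const hcont hc.conj_stereographicNormal_sq_eq z w
  exact stereographicNormal_injective (star_injective hconj)

end IsMinimalSlope

section Gradient

variable {u : ℝ × ℝ → ℝ}

theorem fderiv_apply_eq_ux_mul_add_uy_mul (p v : ℝ × ℝ) :
    fderiv ℝ u p v = ux u p * v.1 + uy u p * v.2 := by
  have hv : v = v.1 • (1, 0) + v.2 • (0, 1) := by simp
  conv_lhs => rw [hv]
  simp only [map_add, map_smul, smul_eq_mul, ux, uy]
  ring

theorem fderiv_uy_apply_one_zero (hu : Differentiable ℝ u) (hu' : Differentiable ℝ (fderiv ℝ u))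
    (p : ℝ × ℝ) : fderiv ℝ (uy u) p (1, 0) = uxy u p := by
  have hflip (v w : ℝ × ℝ) :
      fderiv ℝ (fun q => fderiv ℝ u q v) p w = fderiv ℝ (fderiv ℝ u) p w v := by
    rw [fderiv_clm_apply (hu' p) (differentiableAt_const v)]
    simp
  calc fderiv ℝ (uy u) p (1, 0) = fderiv ℝ (fderiv ℝ u) p (1, 0) (0, 1) := hflip _ _
    _ = fderiv ℝ (fderiv ℝ u) p (0, 1) (1, 0) :=
      second_derivative_symmetric (fun q => (hu q).hasFDerivAt) (hu' p).hasFDerivAt _ _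
    _ = uxy u p := (hflip _ _).symm

/-- The gradient of a function on `ℝ × ℝ`, as the field `u_x + i u_y` on `ℂ`. -/
noncomputable def complexGradient (u : ℝ × ℝ → ℝ) (z : ℂ) : ℂ :=
  equivRealProdCLM.symm (ux u (equivRealProdCLM z), uy u (equivRealProdCLM z))

theorem hasFDerivAt_complexGradient (hu' : Differentiable ℝ (fderiv ℝ u)) (z : ℂ) :
    HasFDerivAt (complexGradient u)
      (equivRealProdCLM.symm.toContinuousLinearMap ∘L
        ((fderiv ℝ (ux u) (equivRealProdCLM z)).prod (fderiv ℝ (uy u) (equivRealProdCLM z))) ∘L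
        equivRealProdCLM.toContinuousLinearMap) z := by
  have hdir (v : ℝ × ℝ) : Differentiable ℝ fun p => fderiv ℝ u p v :=
    hu'.clm_apply (differentiable_const v)
  have hgrad := (hdir (1, 0) (equivRealProdCLM z)).hasFDerivAt.prodMk
    (hdir (0, 1) (equivRealProdCLM z)).hasFDerivAt
  exact equivRealProdCLM.symm.hasFDerivAt.comp z (hgrad.comp z equivRealProdCLM.hasFDerivAt)

theorem isMinimalSlope_complexGradient (hu : Differentiable ℝ u)
    (hu' : Differentiable ℝ (fderiv ℝ u))
    (hmse : ∀ p, (1 + uy u p ^ 2) * uxx u p - 2 * ux u p * uy u p * uxy u p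
      + (1 + ux u p ^ 2) * uyy u p = 0) :
    IsMinimalSlope (complexGradient u) where
  differentiable z := (hasFDerivAt_complexGradient hu' z).differentiableAt
  curl_eq_zero z := by
    rw [(hasFDerivAt_complexGradient hu' z).fderiv]
    simpa [uxy] using (fderiv_uy_apply_one_zero hu hu' (z.re, z.im)).symm
  minimal z := by
    rw [(hasFDerivAt_complexGradient hu' z).fderiv]
    simpa [complexGradient, fderiv_uy_apply_one_zero hu hu', uxx, uxy, uyy] using hmse (z.re, z.im)

theorem fderiv_eq_of_complexGradient_eq {z w : ℂ} (h : complexGradient u z = complexGradient u w) :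
    fderiv ℝ u (equivRealProdCLM z) = fderiv ℝ u (equivRealProdCLM w) := by
  obtain ⟨hx, hy⟩ := Prod.mk.inj (equivRealProdCLM.symm.injective h)
  refine ContinuousLinearMap.ext fun v => ?_
  rw [fderiv_apply_eq_ux_mul_add_uy_mul, fderiv_apply_eq_ux_mul_add_uy_mul, hx, hy]

end Gradient

theorem bernstein_minimal_surface_general (u : ℝ × ℝ → ℝ) (hu : Differentiable ℝ u)
    (hu' : Differentiable ℝ (fderiv ℝ u))
    (hmse : ∀ p : ℝ × ℝ,
      (1 + uy u p ^ 2) * uxx u p - 2 * ux u p * uy u p * uxy u p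
        + (1 + ux u p ^ 2) * uyy u p = 0) :
    ∃ a b c : ℝ, ∀ x y : ℝ, u (x, y) = a * x + b * y + c := by
  have hfderiv (p : ℝ × ℝ) : fderiv ℝ u p = fderiv ℝ u 0 := by
    simpa only [ContinuousLinearEquiv.apply_symm_apply] using
      fderiv_eq_of_complexGradient_eq ((isMinimalSlope_complexGradient hu hu' hmse).eq_const
        (equivRealProdCLM.symm p) (equivRealProdCLM.symm 0))
  refine ⟨ux u 0, uy u 0, u 0, fun x y => ?_⟩
  rw [eq_apply_add_of_fderiv_eq_const hu hfderiv, fderiv_apply_eq_ux_mul_add_uy_mul]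

/-- **Bernstein's theorem**: every entire `C²` solution of the minimal surface equation
over `ℝ²` is affine linear. -/
theorem bernstein_minimal_surface (u : ℝ × ℝ → ℝ) (hu : ContDiff ℝ 2 u)
    (hmse : ∀ p : ℝ × ℝ,
      (1 + uy u p ^ 2) * uxx u p - 2 * ux u p * uy u p * uxy u p
        + (1 + ux u p ^ 2) * uyy u p = 0) :
    ∃ a b c : ℝ, ∀ x y : ℝ, u (x, y) = a * x + b * y + c :=
  bernstein_minimal_surface_general u (hu.differentiable two_ne_zero)
    ((hu.fderiv_right (m := 1) (by norm_num)).differentiable one_ne_zero) hmse
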